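/- Let V be a finite-dimensional complex vector space, let Λ(V) denote the exterior algebra of V over ℂ, and for v ∈ V write ι(v) for the image of v in Λ(V). Let A, B, C be modules over Λ(V) and let f : A → B, g : B → C, h : C → A be Λ(V)-module homomorphisms forming an exact triangle, i.e. ker(g) = im(f), ker(h) = im(g), and ker(f) = im(h). Let k ≥ 0 be an integer. Suppose A has degree at most k, i.e. (ι(v₁)·ι(v₂)·…·ι(v_{k+1})) • a = 0 for all v₁, …, v_{k+1} ∈ V and all a ∈ A, and suppose C has degree 0, i.e. ι(v) • c = 0 for all v ∈ V and all c ∈ C. Then B has degree at most k+1, i.e. (ι(v₁)·ι(v₂)·…·ι(v_{k+2})) • b = 0 for all v₁, …, v_{k+2} ∈ V and all b ∈ B. -/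

import Mathlib

/-!
By exactness, a scalar annihilating `C` sends `B` into the image of `A`, where an
annihilator of `A` then kills it. Hence annihilators multiply along `A → B → C`, and a product
of `m + n` elements factors into one of the first `m` and one of the last `n`.
-/

section

variable {R A B C : Type*} [Semiring R]
  [AddCommMonoid A] [Module R A] [AddCommMonoid B] [Module R B] [AddCommMonoid C] [Module R C]
  (f : A →ₗ[R] B) (g : B →ₗ[R] C)

theorem annihilator_mul_annihilator_le_of_ker_le_range
    (hfg : LinearMap.ker g ≤ LinearMap.range f) :
    Module.annihilator R A * Module.annihilator R C ≤ Module.annihilator R B := by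
  refine Ideal.mul_le.mpr fun r hr s hs ↦ Module.mem_annihilator.mpr fun b ↦ ?_
  have hsb : s • b ∈ LinearMap.ker g := by
    rw [LinearMap.mem_ker, map_smul, Module.mem_annihilator.mp hs]
  obtain ⟨a, ha⟩ := hfg hsb
  calc (r * s) • b = r • f a := by rw [mul_smul, ha]
    _ = f (r • a) := (map_smul f r a).symm
    _ = 0 := by rw [Module.mem_annihilator.mp hr, map_zero]

theorem degree_of_middle_module_in_exact_triangle_general {V : Type*} (x : V → R)
    (hfg : LinearMap.ker g ≤ LinearMap.range f) {m n : ℕ}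
    (hA : ∀ (v : Fin m → V) (a : A), (List.ofFn fun i ↦ x (v i)).prod • a = 0)
    (hC : ∀ (v : Fin n → V) (c : C), (List.ofFn fun i ↦ x (v i)).prod • c = 0)
    (v : Fin (m + n) → V) (b : B) :
    (List.ofFn fun i ↦ x (v i)).prod • b = 0 := by
  rw [List.ofFn_add, List.prod_append]
  exact Module.mem_annihilator.mp
    (annihilator_mul_annihilator_le_of_ker_le_range f g hfg <|
      Ideal.mul_mem_mul (Module.mem_annihilator.mpr (hA _)) (Module.mem_annihilator.mpr (hC _))) b

end

/-- If `A → B → C → A` is an exact triangle of modules over the exterior algebra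
`Λ(V)`, `A` has degree at most `k` and `C` has degree `0`, then `B` has degree
at most `k + 1`. -/
theorem degree_of_middle_module_in_exact_triangle
    {V : Type*} [AddCommGroup V] [Module ℂ V] [FiniteDimensional ℂ V]
    {A B C : Type*}
    [AddCommGroup A] [Module (ExteriorAlgebra ℂ V) A]
    [AddCommGroup B] [Module (ExteriorAlgebra ℂ V) B]
    [AddCommGroup C] [Module (ExteriorAlgebra ℂ V) C]
    (f : A →ₗ[ExteriorAlgebra ℂ V] B) (g : B →ₗ[ExteriorAlgebra ℂ V] C)
    (h : C →ₗ[ExteriorAlgebra ℂ V] A)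
    (hfg : LinearMap.ker g = LinearMap.range f)
    (hgh : LinearMap.ker h = LinearMap.range g)
    (hhf : LinearMap.ker f = LinearMap.range h)
    (k : ℕ)
    (hA : ∀ (v : Fin (k + 1) → V) (a : A),
      ((List.ofFn fun i => ExteriorAlgebra.ι ℂ (v i)).prod) • a = 0)
    (hC : ∀ (v : V) (c : C), ExteriorAlgebra.ι ℂ v • c = 0) :
    ∀ (v : Fin (k + 2) → V) (b : B),
      ((List.ofFn fun i => ExteriorAlgebra.ι ℂ (v i)).prod) • b = 0 :=
  degree_of_middle_module_in_exact_triangle_general (m := k + 1) (n := 1) f g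
    (ExteriorAlgebra.ι ℂ) hfg.le hA fun v c ↦ by simpa using hC (v 0) c
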